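/- arXiv:1109.3588 — 6 statements merged into one kernel-verified Lean document; each statement's English description precedes it below -/
import Mathlib

section
/- Let T be a self-adjoint operator on a Hilbert space H and let a < b be real numbers such that [a,b] ∩ Spec(T) = {λ} with a < λ < b. Let 𝓛 ⊆ Dom(T) be a finite-dimensional subspace satisfying min_{0≠u∈𝓛} ⟨Tu,u⟩/‖u‖² < b and max_{0≠u∈𝓛} ⟨Tu,u⟩/‖u‖² > a. Define τ⁺ = max_{0≠u∈𝓛} ⟨(T−a)u,u⟩/‖(T−a)u‖² and τ⁻ = min_{0≠u∈𝓛} ⟨(T−b)u,u⟩/‖(T−b)u‖². Then τ⁺ > 0, τ⁻ < 0, and b + 1/τ⁻ ≤ λ ≤ a + 1/τ⁺. -/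
open Filter Topology
open scoped ComplexInnerProductSpace

/-- A (possibly unbounded, densely defined) linear operator from `E` to `F`,
encoded by its domain together with a total function that is linear on the domain. -/
structure PMap (E F : Type*) [NormedAddCommGroup E] [InnerProductSpace ℂ E]
    [NormedAddCommGroup F] [InnerProductSpace ℂ F] : Type _ where
  dom : Submodule ℂ E
  toFun : E → F
  map_add' : ∀ x ∈ dom, ∀ y ∈ dom, toFun (x + y) = toFun x + toFun y
  map_smul' : ∀ (c : ℂ), ∀ x ∈ dom, toFun (c • x) = c • toFun x

namespace PMap

variable {E F : Type*} [NormedAddCommGroup E] [InnerProductSpace ℂ E]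
  [NormedAddCommGroup F] [InnerProductSpace ℂ F]

/-- `T` is self-adjoint : it is densely defined and the adjoint relation
`⟪T x, y⟫ = ⟪x, z⟫` (for all `x` in the domain) holds iff `y` is in the domain
and `z = T y`. -/
def IsSelfAdjoint (T : PMap E E) : Prop :=
  Dense (T.dom : Set E) ∧
    ∀ y z : E, (∀ x ∈ T.dom, ⟪T.toFun x, y⟫ = ⟪x, z⟫) ↔ y ∈ T.dom ∧ z = T.toFun y

/-- The resolvent set : points `z` where `T - z` has an everywhere defined bounded inverse. -/
def resolventSet (T : PMap E E) : Set ℂ :=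
  {z | ∃ R : E →L[ℂ] E, (∀ x ∈ T.dom, R (T.toFun x - z • x) = x) ∧
      ∀ y : E, R y ∈ T.dom ∧ T.toFun (R y) - z • R y = y}

/-- The spectrum of `T`. -/
def spec (T : PMap E E) : Set ℂ := {z | z ∉ T.resolventSet}

/-- The real points of the spectrum of `T`. -/
def specR (T : PMap E E) : Set ℝ := {t : ℝ | (t : ℂ) ∈ T.spec}

/-- The (real) essential spectrum of `T`, via singular Weyl sequences. -/
def specEssR (T : PMap E E) : Set ℝ :=
  {t : ℝ | ∃ f : ℕ → E, (∀ n, f n ∈ T.dom) ∧ (∀ n, ‖f n‖ = 1) ∧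
      (∀ y : E, Tendsto (fun n => ⟪y, f n⟫) atTop (𝓝 0)) ∧
      Tendsto (fun n => ‖T.toFun (f n) - (t : ℂ) • f n‖) atTop (𝓝 0)}

/-- The eigenspace `ker (T - t)`. -/
def eigSp (T : PMap E E) (t : ℝ) : Submodule ℂ E where
  carrier := {x | x ∈ T.dom ∧ T.toFun x = (t : ℂ) • x}
  add_mem' := by
    rintro a b ⟨ha1, ha2⟩ ⟨hb1, hb2⟩
    exact ⟨T.dom.add_mem ha1 hb1, by rw [T.map_add' a ha1 b hb1, ha2, hb2, smul_add]⟩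
  zero_mem' := by
    refine ⟨T.dom.zero_mem, ?_⟩
    have h := T.map_smul' 0 0 T.dom.zero_mem
    simpa using h
  smul_mem' := by
    rintro c x ⟨hx1, hx2⟩
    refine ⟨T.dom.smul_mem c hx1, ?_⟩
    rw [T.map_smul' c x hx1, hx2]
    exact smul_comm c ((t : ℂ)) x

/-- The distance from `u` to the set `L` in the graph norm of `T`. -/
noncomputable def gdist (T : PMap E E) (u : E) (L : Set E) : ℝ :=
  sInf {r | ∃ v ∈ L, r = Real.sqrt (‖u - v‖ ^ 2 + ‖T.toFun u - T.toFun v‖ ^ 2)}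

end PMap

namespace PMap

variable {E : Type*} [NormedAddCommGroup E] [InnerProductSpace ℂ E]

/-- The Rayleigh quotient `⟨Tu,u⟩/‖u‖²`. -/
noncomputable def rayleigh (T : PMap E E) (u : E) : ℝ :=
  (⟪T.toFun u, u⟫).re / ‖u‖ ^ 2

/-- The inverse residual `⟨(T−s)u,u⟩/‖(T−s)u‖²`. -/
noncomputable def invRes (T : PMap E E) (s : ℝ) (u : E) : ℝ :=
  (⟪T.toFun u - (s : ℂ) • u, u⟫).re / ‖T.toFun u - (s : ℂ) • u‖ ^ 2

end PMap

/-!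
If `s` lies in the resolvent set of `T`, then the inverse residual of `T` at `u` is the Rayleigh
quotient of the bounded self-adjoint operator `R = (T - s)⁻¹` at `(T - s) u`. By the spectral
mapping `t ↦ (t - s)⁻¹`, a gap `[s, t)` in the spectrum of `T` forces the spectrum of `R` to lie
below `(t - s)⁻¹`, so no inverse residual exceeds `(t - s)⁻¹`; a gap on the left of `s` gives a
lower bound in the same way. With `(s, t) = (a, λ)` and `(s, t) = (b, λ)` these are the two
enclosures, since the hypotheses on the Rayleigh quotients of `T` fix the signs of `τ⁺` and `τ⁻`.
-/

theorem mem_resolventSet_of_resolvent_identity {𝕜 A : Type*} [Field 𝕜] [Ring A] [Algebra 𝕜 A]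
    {R S : A} {μ : 𝕜} (hμ : μ ≠ 0) (hRS : S - R = μ⁻¹ • (R * S)) (hSR : S - R = μ⁻¹ • (S * R)) :
    μ ∈ resolventSet 𝕜 R := by
  have hinv : ∀ P : A, S - R = μ⁻¹ • P →
      1 + μ⁻¹ • S - (μ⁻¹ • R + (μ⁻¹ * μ⁻¹) • P) = 1 := by
    intro P hP
    rw [mul_smul, ← hP, smul_sub]
    abel
  refine spectrum.mem_resolventSet_of_left_right_inverse
    (b := μ⁻¹ • (1 : A) + (μ⁻¹ * μ⁻¹) • S) (c := μ⁻¹ • (1 : A) + (μ⁻¹ * μ⁻¹) • S) ?_ ?_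
  · refine Eq.trans ?_ (hinv _ hRS)
    simp only [Algebra.algebraMap_eq_smul_one, sub_mul, mul_add, smul_mul_assoc, mul_smul_comm,
      one_mul, mul_one]
    match_scalars <;> field_simp
  · refine Eq.trans ?_ (hinv _ hSR)
    simp only [Algebra.algebraMap_eq_smul_one, mul_sub, add_mul, smul_mul_assoc, mul_smul_comm,
      one_mul, mul_one]
    match_scalars <;> field_simp

section BoundedOperators

variable {H : Type*} [NormedAddCommGroup H] [InnerProductSpace ℂ H] [CompleteSpace H]
  {A : H →L[ℂ] H} {r : ℝ} {v : H}

theorem rayleighQuotient_le_of_spectrum_le (hA : IsSelfAdjoint A)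
    (hr : ∀ μ ∈ spectrum ℝ A, μ ≤ r) (hv : v ≠ 0) : A.rayleighQuotient v ≤ r := by
  have hpos := (le_algebraMap_of_spectrum_le hr hA).re_inner_nonneg_left v
  rw [div_le_iff₀ (by positivity), ContinuousLinearMap.reApplyInnerSelf_apply]
  simpa [Algebra.algebraMap_eq_smul_one, inner_sub_left, inner_smul_left_eq_smul,
    ← Complex.ofReal_pow] using hpos

theorem le_rayleighQuotient_of_le_spectrum (hA : IsSelfAdjoint A)
    (hr : ∀ μ ∈ spectrum ℝ A, r ≤ μ) (hv : v ≠ 0) : r ≤ A.rayleighQuotient v := by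
  have hpos := (algebraMap_le_of_le_spectrum hr hA).re_inner_nonneg_left v
  rw [le_div_iff₀ (by positivity), ContinuousLinearMap.reApplyInnerSelf_apply]
  simpa [Algebra.algebraMap_eq_smul_one, inner_sub_left, inner_smul_left_eq_smul,
    ← Complex.ofReal_pow] using hpos

end BoundedOperators

namespace PMap

section Resolvent

variable {E : Type*} [NormedAddCommGroup E] [InnerProductSpace ℂ E] {T : PMap E E}

/-- `T` is symmetric: `⟪T x, y⟫ = ⟪x, T y⟫` for all `x` and `y` in the domain, which need not be
dense. -/
def IsSymmetric (T : PMap E E) : Prop :=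
  ∀ x ∈ T.dom, ∀ y ∈ T.dom, ⟪T.toFun x, y⟫ = ⟪x, T.toFun y⟫

theorem IsSelfAdjoint.isSymmetric (hT : T.IsSelfAdjoint) : T.IsSymmetric :=
  fun x hx y hy => (hT.2 y (T.toFun y)).2 ⟨hy, rfl⟩ x hx

/-- `R` is the resolvent `(T - z)⁻¹`, the bounded operator whose existence puts `z` in
`T.resolventSet`. -/
def IsResolvent (T : PMap E E) (z : ℂ) (R : E →L[ℂ] E) : Prop :=
  (∀ x ∈ T.dom, R (T.toFun x - z • x) = x) ∧
    ∀ y : E, R y ∈ T.dom ∧ T.toFun (R y) - z • R y = y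

theorem IsResolvent.sub_eq_smul_mul {z w : ℂ} {R S : E →L[ℂ] E} (hR : T.IsResolvent z R)
    (hS : T.IsResolvent w S) : S - R = (w - z) • (R * S) := by
  ext y
  obtain ⟨hSy, hTSy⟩ := hS.2 y
  have hshift : T.toFun (S y) - z • S y = y + (w - z) • S y := by
    nth_rewrite 3 [← hTSy]
    module
  have hRSy : R (y + (w - z) • S y) = S y := hshift ▸ hR.1 (S y) hSy
  rw [map_add, map_smul] at hRSy
  exact sub_eq_of_eq_add' hRSy.symm

theorem IsResolvent.mem_resolventSet_of_add_inv_mem {z μ : ℂ} {R : E →L[ℂ] E}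
    (hR : T.IsResolvent z R) (hμ : μ ≠ 0) (hz : z + μ⁻¹ ∈ T.resolventSet) :
    μ ∈ _root_.resolventSet ℂ R := by
  obtain ⟨S, hS : T.IsResolvent (z + μ⁻¹) S⟩ := hz
  refine mem_resolventSet_of_resolvent_identity hμ (S := S) ?_ ?_
  · simpa using hR.sub_eq_smul_mul hS
  · simpa [neg_eq_iff_eq_neg] using congrArg Neg.neg (hS.sub_eq_smul_mul hR)

theorem IsResolvent.add_inv_mem_specR {s μ : ℝ} {R : E →L[ℂ] E} (hR : T.IsResolvent s R)
    (hμ : μ ≠ 0) (hmem : μ ∈ spectrum ℝ R) : s + μ⁻¹ ∈ T.specR := by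
  intro hres
  refine (spectrum.algebraMap_mem_iff ℂ).2 hmem (hR.mem_resolventSet_of_add_inv_mem ?_ ?_)
  · simpa using hμ
  · simpa using hres

theorem IsResolvent.isSelfAdjoint [CompleteSpace E] {s : ℝ} {R : E →L[ℂ] E}
    (hR : T.IsResolvent s R) (hT : T.IsSymmetric) : _root_.IsSelfAdjoint R := by
  refine ContinuousLinearMap.isSelfAdjoint_iff_isSymmetric.2 fun x y => ?_
  obtain ⟨hRx, hTRx⟩ := hR.2 x
  obtain ⟨hRy, hTRy⟩ := hR.2 y
  calc ⟪R x, y⟫ = ⟪R x, T.toFun (R y) - (s : ℂ) • R y⟫ := by rw [hTRy]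
    _ = ⟪T.toFun (R x) - (s : ℂ) • R x, R y⟫ := by simp [hT (R x) hRx (R y) hRy]
    _ = ⟪x, R y⟫ := by rw [hTRx]

end Resolvent

section InverseResidual

variable {E : Type*} [NormedAddCommGroup E] [InnerProductSpace ℂ E] {T : PMap E E} {s t : ℝ}
  {u : E}

theorem invRes_mul_norm_sq :
    T.invRes s u * ‖T.toFun u - (s : ℂ) • u‖ ^ 2 = (T.rayleigh u - s) * ‖u‖ ^ 2 := by
  have hres : T.invRes s u * ‖T.toFun u - (s : ℂ) • u‖ ^ 2
      = (⟪T.toFun u - (s : ℂ) • u, u⟫).re :=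
    div_mul_cancel_of_imp fun h => by simp_all
  have hray : T.rayleigh u * ‖u‖ ^ 2 = (⟪T.toFun u, u⟫).re :=
    div_mul_cancel_of_imp fun h => by simp_all
  rw [hres, sub_mul, hray]
  simp [inner_self_eq_norm_sq_to_K, ← Complex.ofReal_pow]

theorem invRes_pos (hu : u ≠ 0) (hs : s < T.rayleigh u) : 0 < T.invRes s u := by
  refine pos_of_mul_pos_left ?_ (sq_nonneg ‖T.toFun u - (s : ℂ) • u‖)
  rw [invRes_mul_norm_sq]
  exact mul_pos (sub_pos.2 hs) (by positivity)

theorem invRes_neg (hu : u ≠ 0) (hs : T.rayleigh u < s) : T.invRes s u < 0 := by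
  refine neg_of_mul_neg_left ?_ (sq_nonneg ‖T.toFun u - (s : ℂ) • u‖)
  rw [invRes_mul_norm_sq]
  exact mul_neg_of_neg_of_pos (sub_neg.2 hs) (by positivity)

theorem IsResolvent.rayleighQuotient_eq_invRes {R : E →L[ℂ] E} (hR : T.IsResolvent s R)
    (hu : u ∈ T.dom) : R.rayleighQuotient (T.toFun u - (s : ℂ) • u) = T.invRes s u := by
  rw [invRes, ContinuousLinearMap.rayleighQuotient, ContinuousLinearMap.reApplyInnerSelf_apply,
    hR.1 u hu, inner_re_symm, RCLike.re_eq_complex_re]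

theorem IsResolvent.sub_smul_ne_zero {z : ℂ} {R : E →L[ℂ] E} (hR : T.IsResolvent z R)
    (hu : u ∈ T.dom) (hu0 : u ≠ 0) : T.toFun u - z • u ≠ 0 := fun h =>
  hu0 <| by rw [← hR.1 u hu, h, map_zero]

variable [CompleteSpace E]

theorem IsSymmetric.invRes_le_inv_sub (hT : T.IsSymmetric) (hst : s < t)
    (hgap : Disjoint T.specR (Set.Ico s t)) (hu : u ∈ T.dom) (hu0 : u ≠ 0) :
    T.invRes s u ≤ (t - s)⁻¹ := by
  obtain ⟨R, hR : T.IsResolvent s R⟩ : (s : ℂ) ∈ T.resolventSet :=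
    not_not.1 fun hs => hgap.notMem_of_mem_left hs ⟨le_rfl, hst⟩
  rw [← hR.rayleighQuotient_eq_invRes hu]
  refine rayleighQuotient_le_of_spectrum_le (hR.isSelfAdjoint hT) (fun μ hμ => ?_)
    (hR.sub_smul_ne_zero hu hu0)
  by_contra! hlt
  have hμ_pos : 0 < μ := (inv_pos.2 (sub_pos.2 hst)).trans hlt
  refine hgap.notMem_of_mem_left (hR.add_inv_mem_specR hμ_pos.ne' hμ) ⟨?_, ?_⟩
  · linarith [inv_pos.2 hμ_pos]
  · linarith [inv_lt_of_inv_lt₀ (sub_pos.2 hst) hlt]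

theorem IsSymmetric.inv_sub_le_invRes (hT : T.IsSymmetric) (hts : t < s)
    (hgap : Disjoint T.specR (Set.Ioc t s)) (hu : u ∈ T.dom) (hu0 : u ≠ 0) :
    (t - s)⁻¹ ≤ T.invRes s u := by
  obtain ⟨R, hR : T.IsResolvent s R⟩ : (s : ℂ) ∈ T.resolventSet :=
    not_not.1 fun hs => hgap.notMem_of_mem_left hs ⟨hts, le_rfl⟩
  rw [← hR.rayleighQuotient_eq_invRes hu]
  refine le_rayleighQuotient_of_le_spectrum (hR.isSelfAdjoint hT) (fun μ hμ => ?_)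
    (hR.sub_smul_ne_zero hu hu0)
  by_contra! hlt
  have hμ_neg : μ < 0 := hlt.trans (inv_lt_zero.2 (sub_neg.2 hts))
  refine hgap.notMem_of_mem_left (hR.add_inv_mem_specR hμ_neg.ne hμ) ⟨?_, ?_⟩
  · linarith [(lt_inv_of_neg hμ_neg (sub_neg.2 hts)).1 hlt]
  · linarith [inv_lt_zero.2 hμ_neg]

end InverseResidual

end PMap

theorem statement0_general
    {H : Type*} [NormedAddCommGroup H] [InnerProductSpace ℂ H] [CompleteSpace H]
    (T : PMap H H) (hT : T.IsSymmetric) {a b lam : ℝ} (halam : a < lam) (hlamb : lam < b)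
    (hspec : T.specR ∩ Set.Icc a b ⊆ {lam}) {L : Set H} (hL : L ⊆ T.dom)
    (hmin : ∃ u ∈ L, u ≠ 0 ∧ T.rayleigh u < b) (hmax : ∃ u ∈ L, u ≠ 0 ∧ a < T.rayleigh u)
    {τp τm : ℝ} (hτp : IsLUB {r : ℝ | ∃ u ∈ L, u ≠ 0 ∧ r = T.invRes a u} τp)
    (hτm : IsGLB {r : ℝ | ∃ u ∈ L, u ≠ 0 ∧ r = T.invRes b u} τm) :
    0 < τp ∧ τm < 0 ∧ b + 1 / τm ≤ lam ∧ lam ≤ a + 1 / τp := by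
  have hτp_pos : 0 < τp := by
    obtain ⟨u, huL, hu0, hu⟩ := hmax
    exact (PMap.invRes_pos hu0 hu).trans_le (hτp.1 ⟨u, huL, hu0, rfl⟩)
  have hτm_neg : τm < 0 := by
    obtain ⟨u, huL, hu0, hu⟩ := hmin
    exact (hτm.1 ⟨u, huL, hu0, rfl⟩).trans_lt (PMap.invRes_neg hu0 hu)
  have hgap_left : Disjoint T.specR (Set.Ico a lam) := Set.disjoint_left.2 fun x hx hxa =>
    hxa.2.ne (hspec ⟨hx, hxa.1, (hxa.2.trans hlamb).le⟩)
  have hgap_right : Disjoint T.specR (Set.Ioc lam b) := Set.disjoint_left.2 fun x hx hxb =>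
    hxb.1.ne' (hspec ⟨hx, (halam.trans hxb.1).le, hxb.2⟩)
  have hτp_le : τp ≤ (lam - a)⁻¹ := hτp.2 fun r ⟨u, huL, hu0, hr⟩ =>
    hr ▸ hT.invRes_le_inv_sub halam hgap_left (hL huL) hu0
  have hτm_ge : (lam - b)⁻¹ ≤ τm := hτm.2 fun r ⟨u, huL, hu0, hr⟩ =>
    hr ▸ hT.inv_sub_le_invRes hlamb hgap_right (hL huL) hu0
  rw [one_div, one_div]
  refine ⟨hτp_pos, hτm_neg, ?_, ?_⟩
  · linarith [(inv_le_of_neg (sub_neg.2 hlamb) hτm_neg).1 hτm_ge]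
  · linarith [(le_inv_comm₀ hτp_pos (sub_pos.2 halam)).1 hτp_le]

/-- Lemma 3.1 of the paper.  Let `T` be a self-adjoint operator, let
`[a,b] ∩ Spec T = {lam}` with `a < lam < b`, and let `L ⊆ Dom T` be a finite-dimensional
subspace whose Rayleigh quotients dip below `b` and above `a`.  Then the inverse residuals
`τ⁺ = max ⟨(T−a)u,u⟩/‖(T−a)u‖²` and `τ⁻ = min ⟨(T−b)u,u⟩/‖(T−b)u‖²` over `L \ {0}`
satisfy `τ⁺ > 0`, `τ⁻ < 0` and `b + 1/τ⁻ ≤ lam ≤ a + 1/τ⁺`. -/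
theorem statement0
    {H : Type*} [NormedAddCommGroup H] [InnerProductSpace ℂ H] [CompleteSpace H]
    (T : PMap H H) (hT : T.IsSelfAdjoint)
    (a b lam : ℝ) (hab : a < b) (halam : a < lam) (hlamb : lam < b)
    (hspec : T.specR ∩ Set.Icc a b = {lam})
    (L : Submodule ℂ H) (hL : (L : Set H) ⊆ T.dom) [FiniteDimensional ℂ L]
    (hmin : ∃ u ∈ L, u ≠ 0 ∧ T.rayleigh u < b)
    (hmax : ∃ u ∈ L, u ≠ 0 ∧ a < T.rayleigh u)
    (τp τm : ℝ)
    (hτp : IsGreatest {r : ℝ | ∃ u ∈ L, u ≠ 0 ∧ r = T.invRes a u} τp)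
    (hτm : IsLeast {r : ℝ | ∃ u ∈ L, u ≠ 0 ∧ r = T.invRes b u} τm) :
    0 < τp ∧ τm < 0 ∧ b + 1 / τm ≤ lam ∧ lam ≤ a + 1 / τp :=
  statement0_general T hT.isSymmetric halam hlamb hspec.subset hL hmin hmax hτp.isLUB hτm.isGLB
end

section
/- Let T be a self-adjoint operator on a Hilbert space H and let b be a real number with b ∉ Spec(T). If (𝓛_n) is a sequence of subspaces of Dom(T) belonging to Λ(T), then the image subspaces 𝓛̂_n = (T−b)𝓛_n belong to Λ, i.e., dist[v, (T−b)𝓛_n] → 0 for every v ∈ H. -/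
open Filter Topology
open scoped ComplexInnerProductSpace

/-!
For `u ∈ Dom(T)` and `w ∈ L ⊆ Dom(T)` one has `(T - z) u - (T - z) w = (T - z) (u - w)`, and `T - z`
is bounded from the graph norm of `T` to the norm of the space, by `1 + ‖z‖`. So the distance from
`v = (T - z) u` to `(T - z) L` is at most `1 + ‖z‖` times the graph distance from `u` to `L`, and
every `v` has this form as soon as `T - z` is onto.
-/

namespace PMap

section GraphNorm

variable {E F : Type*} [NormedAddCommGroup E] [InnerProductSpace ℂ E]
  [NormedAddCommGroup F] [InnerProductSpace ℂ F]

/-- The graph norm `‖x‖_T = (‖x‖² + ‖T x‖²)^{1/2}`, meaningful for `x ∈ Dom(T)`; the distance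
`PMap.gdist` is measured in it. -/
noncomputable def graphNorm (T : PMap E F) (x : E) : ℝ :=
  √(‖x‖ ^ 2 + ‖T.toFun x‖ ^ 2)

theorem norm_le_graphNorm (T : PMap E F) (x : E) : ‖x‖ ≤ T.graphNorm x :=
  Real.le_sqrt_of_sq_le (le_add_of_nonneg_right (sq_nonneg _))

theorem norm_toFun_le_graphNorm (T : PMap E F) (x : E) : ‖T.toFun x‖ ≤ T.graphNorm x :=
  Real.le_sqrt_of_sq_le (le_add_of_nonneg_left (sq_nonneg _))

theorem toFun_sub (T : PMap E F) {x y : E} (hx : x ∈ T.dom) (hy : y ∈ T.dom) :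
    T.toFun (x - y) = T.toFun x - T.toFun y := by
  rw [eq_sub_iff_add_eq, ← T.map_add' _ (T.dom.sub_mem hx hy) _ hy, sub_add_cancel]

end GraphNorm

section Shift

variable {E : Type*} [NormedAddCommGroup E] [InnerProductSpace ℂ E] (T : PMap E E)

theorem norm_toFun_sub_smul_le (z : ℂ) (x : E) :
    ‖T.toFun x - z • x‖ ≤ (1 + ‖z‖) * T.graphNorm x :=
  calc
    ‖T.toFun x - z • x‖ ≤ ‖T.toFun x‖ + ‖z‖ * ‖x‖ := by
      simpa only [norm_smul] using norm_sub_le (T.toFun x) (z • x)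
    _ ≤ T.graphNorm x + ‖z‖ * T.graphNorm x := by
      gcongr
      · exact T.norm_toFun_le_graphNorm x
      · exact T.norm_le_graphNorm x
    _ = (1 + ‖z‖) * T.graphNorm x := by ring

theorem dist_toFun_sub_smul_le (z : ℂ) {u w : E} (hu : u ∈ T.dom) (hw : w ∈ T.dom) :
    dist (T.toFun u - z • u) (T.toFun w - z • w) ≤ (1 + ‖z‖) * T.graphNorm (u - w) := by
  rw [dist_eq_norm, sub_sub_sub_comm, ← T.toFun_sub hu hw, ← smul_sub]
  exact T.norm_toFun_sub_smul_le z (u - w)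

theorem gdist_eq_iInf {u : E} (hu : u ∈ T.dom) {L : Set E} (hL : L ⊆ T.dom) :
    T.gdist u L = ⨅ w : L, T.graphNorm (u - w) := by
  have graphNorm_sub (w : L) :
      T.graphNorm (u - w) = √(‖u - w‖ ^ 2 + ‖T.toFun u - T.toFun w‖ ^ 2) := by
    rw [graphNorm, T.toFun_sub hu (hL w.2)]
  simp only [gdist, iInf, graphNorm_sub]
  congr 1
  ext r
  simp only [Set.mem_ofPred_eq, Set.mem_range, Subtype.exists, exists_prop, eq_comm]

theorem infDist_toFun_sub_smul_le (z : ℂ) {u : E} (hu : u ∈ T.dom) {L : Set E}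
    (hL : L ⊆ T.dom) (hne : L.Nonempty) :
    Metric.infDist (T.toFun u - z • u) {y : E | ∃ x ∈ L, y = T.toFun x - z • x} ≤
      (1 + ‖z‖) * T.gdist u L := by
  have := hne.to_subtype
  rw [T.gdist_eq_iInf hu hL, Real.mul_iInf_of_nonneg (by positivity)]
  refine le_ciInf fun w ↦ ?_
  have hmem : T.toFun w - z • w ∈ {y : E | ∃ x ∈ L, y = T.toFun x - z • x} := ⟨w, w.2, rfl⟩
  exact (Metric.infDist_le_dist_of_mem hmem).trans (T.dist_toFun_sub_smul_le z hu (hL w.2))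

variable {T} in
theorem exists_toFun_sub_smul_eq {z : ℂ} (hz : z ∈ T.resolventSet) (v : E) :
    ∃ u ∈ T.dom, T.toFun u - z • u = v :=
  let ⟨R, _, hR⟩ := hz
  ⟨R v, hR v⟩

end Shift

end PMap

theorem statement2_general
    {E ι : Type*} [NormedAddCommGroup E] [InnerProductSpace ℂ E] (T : PMap E E) (z : ℂ)
    (hsurj : ∀ v : E, ∃ u ∈ T.dom, T.toFun u - z • u = v)
    {l : Filter ι} (L : ι → Set E) (hLdom : ∀ i, L i ⊆ T.dom) (hLne : ∀ i, (L i).Nonempty)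
    (hΛ : ∀ u ∈ T.dom, Tendsto (fun i ↦ T.gdist u (L i)) l (𝓝 0)) (v : E) :
    Tendsto (fun i ↦ Metric.infDist v {y : E | ∃ u ∈ L i, y = T.toFun u - z • u}) l (𝓝 0) := by
  obtain ⟨u, hu, rfl⟩ := hsurj v
  have hlim : Tendsto (fun i ↦ (1 + ‖z‖) * T.gdist u (L i)) l (𝓝 0) := by
    simpa only [mul_zero] using (hΛ u hu).const_mul (1 + ‖z‖)
  exact squeeze_zero (fun _ ↦ Metric.infDist_nonneg)
    (fun i ↦ T.infDist_toFun_sub_smul_le z hu (hLdom i) (hLne i)) hlim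

/-- from the proof of Lemma 3.2.  If `b ∉ Spec T` and `(L n) ∈ Λ(T)`
(graph-norm density of the trial subspaces in `Dom T`), then the image subspaces
`L̂ n = (T − b) (L n)` belong to `Λ`, i.e. `dist[v, (T − b)(L n)] → 0` for every `v ∈ H`. -/
theorem statement2
    {H : Type*} [NormedAddCommGroup H] [InnerProductSpace ℂ H] [CompleteSpace H]
    (T : PMap H H) (hT : T.IsSelfAdjoint)
    (b : ℝ) (hb : b ∉ T.specR)
    (L : ℕ → Submodule ℂ H) (hLdom : ∀ n, (L n : Set H) ⊆ T.dom)
    (hΛ : ∀ u ∈ T.dom, Tendsto (fun n => T.gdist u (L n)) atTop (𝓝 0)) :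
    ∀ v : H,
      Tendsto (fun n => Metric.infDist v {y : H | ∃ u ∈ L n, y = T.toFun u - (b : ℂ) • u})
        atTop (𝓝 0) :=
  statement2_general T b (PMap.exists_toFun_sub_smul_eq (not_not.mp hb)) (fun n ↦ L n) hLdom
    (fun n ↦ ⟨0, (L n).zero_mem⟩) hΛ
end

section
/- Let T be a self-adjoint operator on a Hilbert space H, let λ be an eigenvalue of T with k = dim ker(T−λ) < ∞, and let {φ₁,…,φ_k} be an orthonormal basis of ker(T−λ). Let b > λ be real, let ε > 0, and suppose u_1,…,u_k ∈ Dom(T) satisfy ‖(T−b)(φ_j − u_j)‖ ≤ (1+|b|)ε for each 1 ≤ j ≤ k. Then for every unit vector φ ∈ ker(T−λ), ‖φ − Σ_{j=1}^{k} (⟨φ_j,φ⟩/(λ−b)) (T−b)u_j‖ ≤ k(1+|b|)ε/(b−λ). In particular, the (non-symmetric) subspace gap δ(ker(T−λ), (T−b)·span{u_1,…,u_k}) is at most k(1+|b|)ε/(b−λ). -/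
open Filter Topology
open scoped ComplexInnerProductSpace

/-
On `ker (T - λ)` the operator `T - b` is multiplication by `λ - b`, so the hypothesis says that
each `(T - b) uⱼ` is close to `(λ - b) φⱼ`. Dividing by `λ - b`, the sum in the theorem is the
orthonormal expansion of `x` with every `φⱼ` replaced by a vector close to it.
-/

section OrthonormalFamily

variable {𝕜 E ι : Type*} [RCLike 𝕜] [NormedAddCommGroup E] [InnerProductSpace 𝕜 E] [Fintype ι]
  {φ : ι → E} {x : E}

theorem sum_inner_smul_eq_of_mem_span (hφ : Orthonormal 𝕜 φ)
    (hx : x ∈ Submodule.span 𝕜 (Set.range φ)) : ∑ j, inner 𝕜 (φ j) x • φ j = x := by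
  obtain ⟨c, rfl⟩ := (Submodule.mem_span_range_iff_exists_fun 𝕜).1 hx
  simp only [hφ.inner_right_fintype]

theorem norm_sum_inner_smul_le (hφ : ∀ j, ‖φ j‖ ≤ 1) (w : ι → E) (x : E) :
    ‖∑ j, inner 𝕜 (φ j) x • w j‖ ≤ ‖x‖ * ∑ j, ‖w j‖ := by
  rw [Finset.mul_sum]
  refine norm_sum_le_of_le _ fun j _ => ?_
  have inner_le : ‖inner 𝕜 (φ j) x‖ ≤ ‖x‖ :=
    (norm_inner_le_norm (φ j) x).trans (mul_le_of_le_one_left (norm_nonneg x) (hφ j))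
  rw [norm_smul]
  gcongr

theorem norm_sub_sum_inner_div_smul_le (hφ : Orthonormal 𝕜 φ)
    (hx : x ∈ Submodule.span 𝕜 (Set.range φ)) {ζ : 𝕜} (hζ : ζ ≠ 0) {v : ι → E} {C : ℝ}
    (hv : ∀ j, ‖ζ • φ j - v j‖ ≤ C) :
    ‖x - ∑ j, (inner 𝕜 (φ j) x / ζ) • v j‖ ≤ Fintype.card ι * C / ‖ζ‖ * ‖x‖ := by
  have error_eq : x - ∑ j, (inner 𝕜 (φ j) x / ζ) • v j =
      ζ⁻¹ • ∑ j, inner 𝕜 (φ j) x • (ζ • φ j - v j) := by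
    conv_lhs => enter [1]; rw [← sum_inner_smul_eq_of_mem_span hφ hx]
    rw [← Finset.sum_sub_distrib, Finset.smul_sum]
    refine Finset.sum_congr rfl fun j _ => ?_
    match_scalars <;> field_simp
  calc ‖x - ∑ j, (inner 𝕜 (φ j) x / ζ) • v j‖
      = ‖ζ‖⁻¹ * ‖∑ j, inner 𝕜 (φ j) x • (ζ • φ j - v j)‖ := by
        rw [error_eq, norm_smul, norm_inv]
    _ ≤ ‖ζ‖⁻¹ * (‖x‖ * ∑ j, ‖ζ • φ j - v j‖) := by
        gcongr
        exact norm_sum_inner_smul_le (fun j => (hφ.norm_eq_one j).le) _ x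
    _ ≤ ‖ζ‖⁻¹ * (‖x‖ * (Fintype.card ι * C)) := by
        gcongr
        simpa using Finset.sum_le_card_nsmul Finset.univ _ C fun j _ => hv j
    _ = Fintype.card ι * C / ‖ζ‖ * ‖x‖ := by ring

end OrthonormalFamily

namespace PMap

variable {E ι : Type*} [NormedAddCommGroup E] [InnerProductSpace ℂ E] [Fintype ι]

/-- The operator `T - z`, bundled as a linear map on the domain of `T`. -/
def subScalar (T : PMap E E) (z : ℂ) : T.dom →ₗ[ℂ] E where
  toFun x := T.toFun x - z • (x : E)
  map_add' x y := by
    rw [Submodule.coe_add, T.map_add' x x.2 y y.2]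
    module
  map_smul' c x := by
    rw [Submodule.coe_smul, T.map_smul' c x x.2, RingHom.id_apply]
    module

theorem toFun_sub_smul_of_mem_eigSp {T : PMap E E} {t : ℝ} {x : E} (hx : x ∈ T.eigSp t) (z : ℂ) :
    T.toFun x - z • x = ((t : ℂ) - z) • x := by
  rw [hx.2, sub_smul]

theorem sum_smul_toFun_sub_smul (T : PMap E E) (z : ℂ) {u : ι → E} (hu : ∀ j, u j ∈ T.dom)
    (c : ι → ℂ) :
    ∑ j, c j • (T.toFun (u j) - z • u j) =
      T.toFun (∑ j, c j • u j) - z • ∑ j, c j • u j := by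
  calc ∑ j, c j • (T.toFun (u j) - z • u j)
      = ∑ j, c j • T.subScalar z ⟨u j, hu j⟩ := rfl
    _ = T.subScalar z (∑ j, c j • ⟨u j, hu j⟩) := by simp only [map_sum, map_smul]
    _ = T.toFun (∑ j, c j • u j) - z • ∑ j, c j • u j := by
        simp only [subScalar, LinearMap.coe_mk, AddHom.coe_mk, Submodule.coe_sum,
          Submodule.coe_smul]

end PMap

theorem statement3_general {H ι : Type*} [NormedAddCommGroup H] [InnerProductSpace ℂ H] [Fintype ι]
    (T : PMap H H) {lam : ℝ} {φ : ι → H} (hON : Orthonormal ℂ φ) (hφmem : ∀ j, φ j ∈ T.eigSp lam)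
    {z : ℂ} (hz : (lam : ℂ) ≠ z) {C : ℝ} {u : ι → H} (hu : ∀ j, u j ∈ T.dom)
    (hclose : ∀ j, ‖(T.toFun (φ j) - T.toFun (u j)) - z • (φ j - u j)‖ ≤ C)
    {x : H} (hx : x ∈ Submodule.span ℂ (Set.range φ)) :
    ‖x - ∑ j, (⟪φ j, x⟫ / ((lam : ℂ) - z)) • (T.toFun (u j) - z • u j)‖ ≤
        Fintype.card ι * C / ‖(lam : ℂ) - z‖ * ‖x‖ ∧
      Metric.infDist x {y : H | ∃ v ∈ Submodule.span ℂ (Set.range u), y = T.toFun v - z • v} ≤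
        Fintype.card ι * C / ‖(lam : ℂ) - z‖ * ‖x‖ := by
  have image_close (j) : ‖((lam : ℂ) - z) • φ j - (T.toFun (u j) - z • u j)‖ ≤ C := by
    rw [← PMap.toFun_sub_smul_of_mem_eigSp (hφmem j), sub_sub_sub_comm, ← smul_sub]
    exact hclose j
  have estimate := norm_sub_sum_inner_div_smul_le hON hx (sub_ne_zero.2 hz) image_close
  refine ⟨estimate, le_trans ?_ (dist_eq_norm x _ ▸ estimate)⟩
  exact Metric.infDist_le_dist_of_mem
    ⟨_, (Submodule.mem_span_range_iff_exists_fun ℂ).2 ⟨_, rfl⟩, T.sum_smul_toFun_sub_smul z hu _⟩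

/-- the key estimate in the proof of Lemma 3.2.  Let `lam` be an
eigenvalue of the self-adjoint operator `T` with `k = dim ker(T − lam) < ∞` and
orthonormal basis `φ₁, …, φ_k` of `ker(T − lam)`.  Let `b > lam`, `ε > 0` and suppose
`u_j ∈ Dom T` satisfy `‖(T − b)(φ_j − u_j)‖ ≤ (1 + |b|) ε`.  Then for every unit vector
`x ∈ ker(T − lam)`,
`‖x − ∑ j (⟨φ_j, x⟩/(lam − b)) (T − b) u_j‖ ≤ k (1 + |b|) ε / (b − lam)`;
in particular the (non-symmetric) subspace gap
`δ(ker(T − lam), (T − b)·span{u_j})` is at most `k (1 + |b|) ε / (b − lam)`. -/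
theorem statement3
    {H : Type*} [NormedAddCommGroup H] [InnerProductSpace ℂ H] [CompleteSpace H]
    (T : PMap H H) (hT : T.IsSelfAdjoint)
    (lam : ℝ) (k : ℕ)
    (φ : Fin k → H) (hON : Orthonormal ℂ φ)
    (hφmem : ∀ j, φ j ∈ T.eigSp lam)
    (hφbasis : T.eigSp lam = Submodule.span ℂ (Set.range φ))
    (b : ℝ) (hb : lam < b) (ε : ℝ) (hε : 0 < ε)
    (u : Fin k → H) (hu : ∀ j, u j ∈ T.dom)
    (hclose : ∀ j, ‖(T.toFun (φ j) - T.toFun (u j)) - (b : ℂ) • (φ j - u j)‖ ≤ (1 + |b|) * ε) :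
    (∀ x ∈ T.eigSp lam, ‖x‖ = 1 →
      ‖x - ∑ j : Fin k, ((⟪φ j, x⟫) / ((lam : ℂ) - (b : ℂ))) •
          (T.toFun (u j) - (b : ℂ) • u j)‖ ≤ (k : ℝ) * (1 + |b|) * ε / (b - lam)) ∧
    (∀ x ∈ T.eigSp lam, ‖x‖ = 1 →
      Metric.infDist x
          {y : H | ∃ v ∈ Submodule.span ℂ (Set.range u), y = T.toFun v - (b : ℂ) • v}
        ≤ (k : ℝ) * (1 + |b|) * ε / (b - lam)) := by
  have norm_gap : ‖(lam : ℂ) - b‖ = b - lam := by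
    rw [norm_sub_rev, ← Complex.ofReal_sub, Complex.norm_of_nonneg (sub_nonneg.2 hb.le)]
  have estimate {x : H} (hx : x ∈ T.eigSp lam) :=
    statement3_general T hON hφmem (Complex.ofReal_injective.ne hb.ne) hu hclose (hφbasis ▸ hx)
  simp only [Fintype.card_fin, norm_gap, ← mul_assoc] at estimate
  exact ⟨fun x hx hx1 => by simpa only [hx1, mul_one] using (estimate hx).1,
    fun x hx hx1 => by simpa only [hx1, mul_one] using (estimate hx).2⟩
end

section
/- Let T be a self-adjoint operator on a Hilbert space H, let φ be a unit vector with Tφ = λφ for some λ > 0, and let (ψ_n) be unit eigenvectors of T orthogonal to φ with Tψ_n = μ_n ψ_n and μ_n → ∞. Set ε_n = 1/μ_n, α_n = (1−ε_n²)^{1/2}, and u_n = α_n φ + ε_n ψ_n. Then ⟨T u_n, u_n⟩/‖T u_n‖² → λ/(λ²+1) as n → ∞, and this limit is strictly less than 1/λ. Moreover, for any real b, ⟨(T−b)u_n,u_n⟩/‖(T−b)u_n‖² → (λ−b)/((λ−b)²+1), which is strictly less than 1/(λ−b) when λ > b. In particular, the Zimmermann–Mertins inverse residuals evaluated along the trial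 vectors u_n do not converge to the reciprocals of the spectral gaps, so the resulting eigenvalue enclosure for λ does not shrink to zero. -/
open Filter Topology
open scoped ComplexInnerProductSpace

/-!
The part `ε n • ψ n` of the trial vector has norm tending to `0`, but its image under `T` has norm
`|ε n * μ n| = 1`. Orthogonality splits both the numerator and the denominator of the inverse
residual into a contribution of `φ` and one of `ψ n`. The latter vanishes in the limit in the
numerator, where `ε n ^ 2` is multiplied by only one factor `μ n - b`, and leaves the extra term `1`
in the denominator, where it is multiplied by two.
-/

section InnerProductSpace

variable {𝕜 E : Type*} [RCLike 𝕜] [NormedAddCommGroup E] [InnerProductSpace 𝕜 E] {x y : E}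

theorem re_inner_smul_add_smul_add_of_inner_eq_zero (h : inner 𝕜 x y = 0) (c d : ℝ) :
    RCLike.re (inner 𝕜 ((c : 𝕜) • x + (d : 𝕜) • y) (x + y)) = c * ‖x‖ ^ 2 + d * ‖y‖ ^ 2 := by
  have h' : inner 𝕜 y x = 0 := inner_eq_zero_symm.mp h
  simp only [inner_add_left, inner_add_right, inner_smul_left, h, h', mul_zero, add_zero, zero_add,
    RCLike.conj_ofReal, map_add, RCLike.re_ofReal_mul, inner_self_eq_norm_sq]

theorem norm_smul_add_smul_sq_of_inner_eq_zero (h : inner 𝕜 x y = 0) (c d : 𝕜) :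
    ‖c • x + d • y‖ ^ 2 = ‖c‖ ^ 2 * ‖x‖ ^ 2 + ‖d‖ ^ 2 * ‖y‖ ^ 2 := by
  have hcd : inner 𝕜 (c • x) (d • y) = 0 := by
    rw [inner_smul_left, inner_smul_right, h, mul_zero, mul_zero]
  rw [sq, norm_add_sq_eq_norm_sq_add_norm_sq_of_inner_eq_zero _ _ hcd, norm_smul, norm_smul]
  ring

end InnerProductSpace

namespace PMap

variable {E ι : Type*} [NormedAddCommGroup E] [InnerProductSpace ℂ E] {T : PMap E E}
  {x y : E} {s t : ℝ}

/-- The Zimmermann–Mertins inverse residual of `T` at the trial vector `u` and shift `b`, the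
quotient `⟪(T - b) u, u⟫ / ‖(T - b) u‖ ^ 2`; for an eigenvector it is the reciprocal of the distance
(with sign) from `b` to the eigenvalue. It takes the junk value `0` when `(T - b) u = 0`. -/
noncomputable def inverseResidual (T : PMap E E) (b : ℝ) (u : E) : ℝ :=
  (⟪T.toFun u - (b : ℂ) • u, u⟫).re / ‖T.toFun u - (b : ℂ) • u‖ ^ 2

theorem toFun_add_sub_smul_of_mem_eigSp (hx : x ∈ T.eigSp s) (hy : y ∈ T.eigSp t) (b : ℝ) :
    T.toFun (x + y) - (b : ℂ) • (x + y) = ((s - b : ℝ) : ℂ) • x + ((t - b : ℝ) : ℂ) • y := by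
  rw [T.map_add' x hx.1 y hy.1, hx.2, hy.2]
  push_cast
  module

theorem inverseResidual_add_of_mem_eigSp (hx : x ∈ T.eigSp s) (hy : y ∈ T.eigSp t)
    (hxy : ⟪x, y⟫ = 0) (b : ℝ) :
    T.inverseResidual b (x + y) =
      ((s - b) * ‖x‖ ^ 2 + (t - b) * ‖y‖ ^ 2) /
        ((s - b) ^ 2 * ‖x‖ ^ 2 + (t - b) ^ 2 * ‖y‖ ^ 2) := by
  have numerator : (⟪((s - b : ℝ) : ℂ) • x + ((t - b : ℝ) : ℂ) • y, x + y⟫).re =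
      (s - b) * ‖x‖ ^ 2 + (t - b) * ‖y‖ ^ 2 :=
    re_inner_smul_add_smul_add_of_inner_eq_zero hxy (s - b) (t - b)
  rw [inverseResidual, toFun_add_sub_smul_of_mem_eigSp hx hy, numerator,
    norm_smul_add_smul_sq_of_inner_eq_zero hxy]
  simp only [Complex.norm_real, Real.norm_eq_abs, sq_abs]

theorem tendsto_inverseResidual_add_of_mem_eigSp {l : Filter ι} {x y : ι → E} {t : ι → ℝ}
    {r κ b : ℝ} (hx : ∀ i, x i ∈ T.eigSp s) (hy : ∀ i, y i ∈ T.eigSp (t i))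
    (hxy : ∀ i, ⟪x i, y i⟫ = 0) (hxr : Tendsto (fun i => ‖x i‖) l (𝓝 r))
    (hy0 : Tendsto (fun i => ‖y i‖) l (𝓝 0)) (hty : Tendsto (fun i => |t i| * ‖y i‖) l (𝓝 κ))
    (hne : (s - b) ^ 2 * r ^ 2 + κ ^ 2 ≠ 0) :
    Tendsto (fun i => T.inverseResidual b (x i + y i)) l
      (𝓝 ((s - b) * r ^ 2 / ((s - b) ^ 2 * r ^ 2 + κ ^ 2))) := by
  have form_zero : Tendsto (fun i => t i * ‖y i‖ ^ 2) l (𝓝 0) := by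
    rw [tendsto_zero_iff_abs_tendsto_zero]
    simpa [Function.comp_def, abs_mul, sq, mul_assoc] using hty.mul hy0
  have shifted_form_zero : Tendsto (fun i => (t i - b) * ‖y i‖ ^ 2) l (𝓝 0) := by
    simpa [sub_mul] using form_zero.sub ((hy0.pow 2).const_mul b)
  have shifted_graph : Tendsto (fun i => (t i - b) ^ 2 * ‖y i‖ ^ 2) l (𝓝 (κ ^ 2)) := by
    have expansion (i : ι) : (t i - b) ^ 2 * ‖y i‖ ^ 2 =
        (|t i| * ‖y i‖) ^ 2 - b * (t i * ‖y i‖ ^ 2) - b * ((t i - b) * ‖y i‖ ^ 2) := by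
      rw [mul_pow, sq_abs]
      ring
    simpa [expansion] using
      ((hty.pow 2).sub (form_zero.const_mul b)).sub (shifted_form_zero.const_mul b)
  simp only [inverseResidual_add_of_mem_eigSp (hx _) (hy _) (hxy _)]
  simpa [Pi.div_def] using (((hxr.pow 2).const_mul (s - b)).add shifted_form_zero).div
    (((hxr.pow 2).const_mul ((s - b) ^ 2)).add shifted_graph) hne

end PMap

theorem div_sq_add_one_lt_one_div {K : Type*} [Field K] [LinearOrder K] [IsStrictOrderedRing K]
    {x : K} (hx : 0 < x) : x / (x ^ 2 + 1) < 1 / x := by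
  rw [div_lt_div_iff₀ (by positivity) hx]
  linarith [sq x]

theorem statement4_general {H ι : Type*} [NormedAddCommGroup H] [InnerProductSpace ℂ H]
    {l : Filter ι} {T : PMap H H} {φ : H} {lam : ℝ} (hφ : φ ∈ T.eigSp lam) (hφnorm : ‖φ‖ = 1)
    {ψ : ι → H} {μ : ι → ℝ} (hψ : ∀ i, ψ i ∈ T.eigSp (μ i)) (hψnorm : ∀ i, ‖ψ i‖ = 1)
    (horth : ∀ i, ⟪φ, ψ i⟫ = 0) (hμ : Tendsto μ l (Bornology.cobounded ℝ))
    {ε α : ι → ℝ} (hε : ∀ i, ε i = 1 / μ i) (hα : ∀ i, α i = Real.sqrt (1 - ε i ^ 2))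
    {u : ι → H} (hu : ∀ i, u i = (α i : ℂ) • φ + (ε i : ℂ) • ψ i) :
    (∀ b : ℝ, Tendsto (fun i => T.inverseResidual b (u i)) l
      (𝓝 ((lam - b) / ((lam - b) ^ 2 + 1)))) ∧
    ∀ b : ℝ, b < lam → (lam - b) / ((lam - b) ^ 2 + 1) < 1 / (lam - b) := by
  refine ⟨fun b => ?_, fun b hb => div_sq_add_one_lt_one_div (sub_pos.mpr hb)⟩
  have ε_zero : Tendsto ε l (𝓝 0) :=
    (tendsto_inv₀_cobounded.comp hμ).congr fun i => by rw [hε, one_div, Function.comp_apply]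
  have α_one : Tendsto α l (𝓝 1) := by
    simpa [← hα] using ((ε_zero.pow 2).const_sub 1).sqrt
  have norm_φ_part : Tendsto (fun i => ‖(α i : ℂ) • φ‖) l (𝓝 1) := by
    simpa [norm_smul, hφnorm] using α_one.abs
  have norm_ψ_part : Tendsto (fun i => ‖(ε i : ℂ) • ψ i‖) l (𝓝 0) := by
    simpa [norm_smul, hψnorm] using ε_zero.abs
  have norm_T_ψ_part : Tendsto (fun i => |μ i| * ‖(ε i : ℂ) • ψ i‖) l (𝓝 1) := by
    refine tendsto_const_nhds.congr' ?_
    filter_upwards [hμ.eventually_ne_cobounded 0] with i hi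
    simp [norm_smul, hψnorm, hε, hi]
  simpa [hu] using PMap.tendsto_inverseResidual_add_of_mem_eigSp (b := b)
    (fun i => (T.eigSp lam).smul_mem (α i : ℂ) hφ)
    (fun i => (T.eigSp (μ i)).smul_mem (ε i : ℂ) (hψ i))
    (fun i => by rw [inner_smul_left, inner_smul_right, horth, mul_zero, mul_zero])
    norm_φ_part norm_ψ_part norm_T_ψ_part (by positivity)

/-- the abstract computation underlying Example 3.3.  Let `φ` be a unit
eigenvector of the self-adjoint operator `T` with eigenvalue `lam > 0`, and let `ψ n` be
unit eigenvectors orthogonal to `φ`, with eigenvalues `μ n → ∞`.  Put `ε n = 1/μ n`,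
`α n = √(1 − ε n ²)` and `u n = α n • φ + ε n • ψ n`.  Then
`⟨T u_n, u_n⟩ / ‖T u_n‖² → lam/(lam²+1) < 1/lam`, and for every real `b`,
`⟨(T−b)u_n, u_n⟩ / ‖(T−b)u_n‖² → (lam−b)/((lam−b)²+1)`, which is `< 1/(lam−b)` when
`lam > b`: the Zimmermann–Mertins inverse residuals along these trial vectors do not
converge to the reciprocals of the spectral gaps. -/
theorem statement4
    {H : Type*} [NormedAddCommGroup H] [InnerProductSpace ℂ H] [CompleteSpace H]
    (T : PMap H H) (hT : T.IsSelfAdjoint)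
    (φ : H) (hφdom : φ ∈ T.dom) (hφnorm : ‖φ‖ = 1)
    (lam : ℝ) (hlam : 0 < lam) (hTφ : T.toFun φ = (lam : ℂ) • φ)
    (ψ : ℕ → H) (hψdom : ∀ n, ψ n ∈ T.dom) (hψnorm : ∀ n, ‖ψ n‖ = 1)
    (horth : ∀ n, ⟪φ, ψ n⟫ = 0)
    (μ : ℕ → ℝ) (hTψ : ∀ n, T.toFun (ψ n) = (μ n : ℂ) • ψ n)
    (hμ : Tendsto μ atTop atTop)
    (ε α : ℕ → ℝ) (hε : ∀ n, ε n = 1 / μ n) (hα : ∀ n, α n = Real.sqrt (1 - ε n ^ 2))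
    (u : ℕ → H) (hu : ∀ n, u n = (α n : ℂ) • φ + (ε n : ℂ) • ψ n) :
    Tendsto (fun n => (⟪T.toFun (u n), u n⟫).re / ‖T.toFun (u n)‖ ^ 2)
        atTop (𝓝 (lam / (lam ^ 2 + 1))) ∧
    lam / (lam ^ 2 + 1) < 1 / lam ∧
    (∀ b : ℝ,
      Tendsto
        (fun n => (⟪T.toFun (u n) - (b : ℂ) • u n, u n⟫).re /
          ‖T.toFun (u n) - (b : ℂ) • u n‖ ^ 2)
        atTop (𝓝 ((lam - b) / ((lam - b) ^ 2 + 1)))) ∧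
    (∀ b : ℝ, b < lam → (lam - b) / ((lam - b) ^ 2 + 1) < 1 / (lam - b)) := by
  obtain ⟨htendsto, hlt⟩ := statement4_general ⟨hφdom, hTφ⟩ hφnorm
    (fun n => ⟨hψdom n, hTψ n⟩) hψnorm horth (hμ.mono_right IsOrderBornology.atTop_le_cobounded)
    hε hα hu
  exact ⟨by simpa [PMap.inverseResidual] using htendsto 0, by simpa using hlt 0 hlam,
    htendsto, hlt⟩
end

section
/- Let T be a nonnegative self-adjoint operator on a Hilbert space H possessing an orthonormal basis of eigenvectors (φ_j)_{j≥1} with Tφ_j = λ_j φ_j, λ_j ≥ 0, and λ_{3n} → ∞ as n → ∞. Set ε_n = 1/λ_{3n}, α_n = (1−ε_n²)^{1/2}, and 𝓛_n = span{α_n φ₁ + ε_n φ_{3n}, φ₂, …, φ_{3n−1}}. Then 𝓛_n ⊆ Dom(T) for every n, and (𝓛_n) ∈ Λ(𝔱): for every u ∈ Dom(𝔱), dist_𝔱[u, 𝓛_n] → 0 as n → ∞. -/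
open Filter Topology
open scoped ComplexInnerProductSpace

section FormNorm

variable {H : Type*} [NormedAddCommGroup H] [InnerProductSpace ℂ H]

/-- The form domain `Dom(𝔱)` of a nonnegative self-adjoint operator expressed in an
orthonormal eigenbasis `φ` with eigenvalues `lam`:
`u ∈ Dom(𝔱) ↔ Σ_j (1 + λ_j)|⟨φ_j, u⟩|² < ∞`. -/
def formDom (φ : ℕ+ → H) (lam : ℕ+ → ℝ) : Set H :=
  {u | Summable fun j => (1 + lam j) * ‖(⟪φ j, u⟫ : ℂ)‖ ^ 2}

/-- The form norm `‖u‖_𝔱 = (Σ_j (1 + λ_j)|⟨φ_j, u⟩|²)^{1/2}` in the eigenbasis. -/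
noncomputable def formNorm (φ : ℕ+ → H) (lam : ℕ+ → ℝ) (u : H) : ℝ :=
  Real.sqrt (∑' j, (1 + lam j) * ‖(⟪φ j, u⟫ : ℂ)‖ ^ 2)

/-- The distance from `u` to the set `L` in the form norm. -/
noncomputable def formDist (φ : ℕ+ → H) (lam : ℕ+ → ℝ) (u : H) (L : Set H) : ℝ :=
  sInf {r | ∃ v ∈ L, r = formNorm φ lam (u - v)}

end FormNorm

/-!
Write `c = ⟪φ 1, u⟫`. Replacing `φ 1` by `a • φ 1 + e • φ m` in the sum of the first `m - 1` terms
of the eigenvector expansion of `u` changes it by `c • ((a - 1) • φ 1 + e • φ m)`, whose form norm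
is at most `|c| (|a - 1| √(1 + λ₁) + |e| √(1 + λₘ))`. Partial sums converge in the form norm, and
with `e = 1/λₘ` the last term is about `λₘ^(-1/2)`: the perturbation is invisible in the form norm,
although `e * λₘ = 1` keeps it visible in the graph norm.
-/

section TrialSpaceApproximation

variable {H : Type*} [NormedAddCommGroup H] [InnerProductSpace ℂ H] {φ : ℕ+ → H} {lam : ℕ+ → ℝ}

/-- The coefficients of `u` in the eigenbasis, weighted by `√(1 + λ_j)` so that the form norm of
`u` is their `ℓ²` norm. -/
noncomputable def formCoeff (φ : ℕ+ → H) (lam : ℕ+ → ℝ) (u : H) (j : ℕ+) : ℂ :=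
  (√(1 + lam j) : ℂ) * ⟪φ j, u⟫

theorem norm_formCoeff_sq (hlam : ∀ j, -1 ≤ lam j) (u : H) (j : ℕ+) :
    ‖formCoeff φ lam u j‖ ^ 2 = (1 + lam j) * ‖⟪φ j, u⟫‖ ^ 2 := by
  rw [formCoeff, norm_mul, mul_pow, Complex.norm_real, Real.norm_eq_abs, sq_abs,
    Real.sq_sqrt (by linarith [hlam j])]

theorem formCoeff_add (u v : H) :
    formCoeff φ lam (u + v) = formCoeff φ lam u + formCoeff φ lam v := by
  ext j
  simp only [formCoeff, inner_add_right, mul_add, Pi.add_apply]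

theorem mem_formDom_iff_memℓp (hlam : ∀ j, -1 ≤ lam j) {u : H} :
    u ∈ formDom φ lam ↔ Memℓp (formCoeff φ lam u) 2 := by
  rw [memℓp_gen_iff (by norm_num)]
  simp [formDom, norm_formCoeff_sq hlam]

theorem formNorm_eq_norm_lp (hlam : ∀ j, -1 ≤ lam j) {u : H}
    (hu : Memℓp (formCoeff φ lam u) 2) :
    formNorm φ lam u = ‖(⟨formCoeff φ lam u, hu⟩ : lp (fun _ : ℕ+ => ℂ) 2)‖ := by
  rw [lp.norm_eq_tsum_rpow (by norm_num)]
  simp [formNorm, norm_formCoeff_sq hlam, Real.sqrt_eq_rpow]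

theorem add_mem_formDom (hlam : ∀ j, -1 ≤ lam j) {u v : H} (hu : u ∈ formDom φ lam)
    (hv : v ∈ formDom φ lam) : u + v ∈ formDom φ lam := by
  rw [mem_formDom_iff_memℓp hlam, formCoeff_add]
  exact ((mem_formDom_iff_memℓp hlam).mp hu).add ((mem_formDom_iff_memℓp hlam).mp hv)

theorem formNorm_add_le (hlam : ∀ j, -1 ≤ lam j) {u v : H} (hu : u ∈ formDom φ lam)
    (hv : v ∈ formDom φ lam) :
    formNorm φ lam (u + v) ≤ formNorm φ lam u + formNorm φ lam v := by
  have hu' := (mem_formDom_iff_memℓp hlam).mp hu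
  have hv' := (mem_formDom_iff_memℓp hlam).mp hv
  have huv := (mem_formDom_iff_memℓp hlam).mp (add_mem_formDom hlam hu hv)
  rw [formNorm_eq_norm_lp hlam hu', formNorm_eq_norm_lp hlam hv', formNorm_eq_norm_lp hlam huv]
  have hadd : (⟨_, huv⟩ : lp (fun _ : ℕ+ => ℂ) 2) = ⟨_, hu'⟩ + ⟨_, hv'⟩ :=
    Subtype.ext (formCoeff_add u v)
  exact hadd ▸ norm_add_le _ _

theorem formNorm_smul (c : ℂ) (u : H) : formNorm φ lam (c • u) = ‖c‖ * formNorm φ lam u := by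
  simp only [formNorm, inner_smul_right, norm_mul, mul_pow, mul_left_comm _ (‖c‖ ^ 2)]
  rw [tsum_mul_left, Real.sqrt_mul (sq_nonneg _), Real.sqrt_sq (norm_nonneg _)]

/-- The form domain as a linear subspace; the bound on `lam` makes all weights `1 + λ_j`
nonnegative. -/
def formSubmodule (φ : ℕ+ → H) (hlam : ∀ j, -1 ≤ lam j) : Submodule ℂ H where
  carrier := formDom φ lam
  zero_mem' := by simp [formDom]
  add_mem' := add_mem_formDom hlam
  smul_mem' c u hu := by
    have h : Summable _ := hu.mul_left (‖c‖ ^ 2)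
    simpa only [formDom, Set.mem_ofPred_eq, inner_smul_right, norm_mul, mul_pow,
      mul_left_comm _ (‖c‖ ^ 2)] using h

theorem hasSum_form_eigenvector (hφ : Orthonormal ℂ φ) (lam : ℕ+ → ℝ) (j : ℕ+) :
    HasSum (fun k => (1 + lam k) * ‖⟪φ k, φ j⟫‖ ^ 2) (1 + lam j) := by
  convert hasSum_single (f := fun k => (1 + lam k) * ‖⟪φ k, φ j⟫‖ ^ 2) j fun k hk => ?_ using 1
  · simp [hφ.1 j]
  · simp [hφ.2 hk]

theorem eigenvector_mem_formDom (hφ : Orthonormal ℂ φ) (j : ℕ+) : φ j ∈ formDom φ lam :=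
  (hasSum_form_eigenvector hφ lam j).summable

theorem formNorm_eigenvector (hφ : Orthonormal ℂ φ) (j : ℕ+) :
    formNorm φ lam (φ j) = √(1 + lam j) := by
  rw [formNorm, (hasSum_form_eigenvector hφ lam j).tsum_eq]

theorem inner_sub_partialSum (hφ : Orthonormal ℂ φ) (u : H) (s : Finset ℕ+) (k : ℕ+) :
    ⟪φ k, u - ∑ j ∈ s, ⟪φ j, u⟫ • φ j⟫ = if k ∈ s then 0 else ⟪φ k, u⟫ := by
  simp only [inner_sub_right, inner_sum, inner_smul_right, orthonormal_iff_ite.mp hφ]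
  split_ifs with hk <;> simp [hk]

theorem formNorm_sub_partialSum (hφ : Orthonormal ℂ φ) (u : H) (s : Finset ℕ+) :
    formNorm φ lam (u - ∑ j ∈ s, ⟪φ j, u⟫ • φ j) =
      √(∑' k : {k // k ∉ s}, (1 + lam k) * ‖⟪φ k, u⟫‖ ^ 2) := by
  refine congrArg Real.sqrt (.trans (tsum_congr fun k => ?_)
    (tsum_subtype {k | k ∉ s} fun k => (1 + lam k) * ‖⟪φ k, u⟫‖ ^ 2).symm)
  by_cases hk : k ∈ s <;> simp [inner_sub_partialSum hφ, hk]

/-- Informative only for `u` in the form domain: elsewhere all these norms are the junk value `0`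
of a divergent `tsum`. -/
theorem tendsto_formNorm_sub_partialSum (hφ : Orthonormal ℂ φ) (u : H) :
    Tendsto (fun s : Finset ℕ+ => formNorm φ lam (u - ∑ j ∈ s, ⟪φ j, u⟫ • φ j)) atTop (𝓝 0) := by
  simp only [formNorm_sub_partialSum hφ]
  simpa only [Real.sqrt_zero] using
    (tendsto_tsum_compl_atTop_zero fun k => (1 + lam k) * ‖⟪φ k, u⟫‖ ^ 2).sqrt

theorem formDist_nonneg (u : H) (L : Set H) : 0 ≤ formDist φ lam u L := by
  refine Real.sInf_nonneg ?_
  rintro _ ⟨v, -, rfl⟩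
  exact Real.sqrt_nonneg _

theorem formDist_le {u v : H} {L : Set H} (hv : v ∈ L) :
    formDist φ lam u L ≤ formNorm φ lam (u - v) := by
  refine csInf_le ⟨0, ?_⟩ ⟨v, hv, rfl⟩
  rintro _ ⟨w, -, rfl⟩
  exact Real.sqrt_nonneg _

/-- The trial space `span {a φ₁ + e φ_m, φ₂, …, φ_{m-1}}`, obtained from the span of the first
`m - 1` eigenvectors by tilting `φ₁` towards `φ_m`. -/
def trialSpace (φ : ℕ+ → H) (a e : ℂ) (m : ℕ+) : Submodule ℂ H :=
  Submodule.span ℂ ({a • φ 1 + e • φ m} ∪ φ '' Set.Icc 2 (m - 1))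

theorem trialSpace_le {D : Submodule ℂ H} (hφD : ∀ j, φ j ∈ D) (a e : ℂ) (m : ℕ+) :
    trialSpace φ a e m ≤ D := by
  refine Submodule.span_le.mpr (Set.union_subset ?_ (Set.image_subset_iff.mpr fun j _ => hφD j))
  exact Set.singleton_subset_iff.mpr
    (D.add_mem (D.smul_mem _ (hφD _)) (D.smul_mem _ (hφD _)))

theorem smul_add_sum_mem_trialSpace (c : ℕ+ → ℂ) (a e : ℂ) (m : ℕ+) :
    c 1 • (a • φ 1 + e • φ m) + ∑ j ∈ Finset.Icc 2 (m - 1), c j • φ j ∈ trialSpace φ a e m := by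
  refine add_mem (Submodule.smul_mem _ _ (Submodule.subset_span (Or.inl rfl)))
    (sum_mem fun j hj => Submodule.smul_mem _ _ (Submodule.subset_span (Or.inr ⟨j, ?_, rfl⟩)))
  exact Finset.mem_Icc.mp hj

theorem insert_one_Icc_two_sub_one {m : ℕ+} (hm : 1 < m) :
    insert 1 (Finset.Icc 2 (m - 1)) = Finset.Iio m := by
  ext k
  have hk : k ≤ m - 1 ↔ k < m :=
    ⟨fun h => PNat.lt_add_one_iff.mpr h |>.trans_eq (PNat.sub_add_of_lt hm), PNat.le_sub_one_of_lt⟩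
  have h2 : 2 ≤ k ↔ k ≠ 1 := (PNat.add_one_le_iff (a := 1)).trans one_lt_iff_ne_one
  rw [Finset.mem_insert, Finset.mem_Icc, Finset.mem_Iio, hk, h2]
  constructor
  · rintro (rfl | ⟨-, hkm⟩) <;> assumption
  · tauto

theorem formDist_trialSpace_le (hlam : ∀ j, -1 ≤ lam j) (hφ : Orthonormal ℂ φ) {u : H}
    (hu : u ∈ formDom φ lam) (a e : ℂ) {m : ℕ+} (hm : 1 < m) :
    formDist φ lam u (trialSpace φ a e m) ≤
      formNorm φ lam (u - ∑ j ∈ Finset.Iio m, ⟪φ j, u⟫ • φ j) +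
        ‖⟪φ 1, u⟫‖ * (‖1 - a‖ * √(1 + lam 1) + ‖e‖ * √(1 + lam m)) := by
  set r := u - ∑ j ∈ Finset.Iio m, ⟪φ j, u⟫ • φ j with hr
  set d := (1 - a) • φ 1 + (-e) • φ m with hd
  have hφmem (c : ℂ) (j : ℕ+) : c • φ j ∈ formSubmodule φ hlam :=
    Submodule.smul_mem _ c (eigenvector_mem_formDom hφ j)
  have hr_mem : r ∈ formSubmodule φ hlam := sub_mem hu (sum_mem fun j _ => hφmem _ j)
  have hd_mem : d ∈ formSubmodule φ hlam := add_mem (hφmem _ _) (hφmem _ _)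
  have hd_le : formNorm φ lam d ≤ ‖1 - a‖ * √(1 + lam 1) + ‖e‖ * √(1 + lam m) := by
    refine (formNorm_add_le hlam (hφmem _ _) (hφmem _ _)).trans_eq ?_
    simp only [formNorm_smul, formNorm_eigenvector hφ, norm_neg]
  have hsplit : u - (⟪φ 1, u⟫ • (a • φ 1 + e • φ m) +
      ∑ j ∈ Finset.Icc 2 (m - 1), ⟪φ j, u⟫ • φ j) = r + ⟪φ 1, u⟫ • d := by
    have h1 : (1 : ℕ+) ∉ Finset.Icc 2 (m - 1) := by simp
    rw [hr, hd, ← insert_one_Icc_two_sub_one hm, Finset.sum_insert h1]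
    module
  calc formDist φ lam u (trialSpace φ a e m)
      ≤ formNorm φ lam (r + ⟪φ 1, u⟫ • d) :=
        hsplit ▸ formDist_le (smul_add_sum_mem_trialSpace (fun j => ⟪φ j, u⟫) a e m)
    _ ≤ formNorm φ lam r + ‖⟪φ 1, u⟫‖ * formNorm φ lam d := by
        rw [← formNorm_smul]
        exact formNorm_add_le hlam hr_mem (Submodule.smul_mem _ _ hd_mem)
    _ ≤ _ := by gcongr

theorem tendsto_formDist_trialSpace (hlam : ∀ j, -1 ≤ lam j) (hφ : Orthonormal ℂ φ) {u : H}
    (hu : u ∈ formDom φ lam) {ι : Type*} {l : Filter ι} {m : ι → ℕ+} (hm : Tendsto m l atTop)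
    {a e : ι → ℂ} (ha : Tendsto a l (𝓝 1))
    (he : Tendsto (fun i => ‖e i‖ * √(1 + lam (m i))) l (𝓝 0)) :
    Tendsto (fun i => formDist φ lam u (trialSpace φ (a i) (e i) (m i))) l (𝓝 0) := by
  have tendsto_Iio : Tendsto (Finset.Iio : ℕ+ → Finset ℕ+) atTop atTop :=
    tendsto_atTop_finset_of_monotone (fun _ _ => Finset.Iio_subset_Iio)
      fun k => ⟨k + 1, Finset.mem_Iio.mpr (PNat.lt_add_right k 1)⟩
  have hpartial : Tendsto (fun i => formNorm φ lam (u - ∑ j ∈ Finset.Iio (m i), ⟪φ j, u⟫ • φ j))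
      l (𝓝 0) :=
    (tendsto_formNorm_sub_partialSum hφ u).comp (tendsto_Iio.comp hm)
  have ha' : Tendsto (fun i => ‖1 - a i‖) l (𝓝 0) := by
    simpa only [sub_self, norm_zero] using (ha.const_sub 1).norm
  refine squeeze_zero' (.of_forall fun i => formDist_nonneg u _)
    ((hm.eventually_gt_atTop 1).mono fun i hi => formDist_trialSpace_le hlam hφ hu _ _ hi) ?_
  simpa only [zero_mul, add_zero, mul_zero] using
    hpartial.add (((ha'.mul_const √(1 + lam 1)).add he).const_mul ‖⟪φ 1, u⟫‖)

end TrialSpaceApproximation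

theorem tendsto_sqrt_one_sub_one_div_sq_atTop :
    Tendsto (fun x : ℝ => √(1 - (1 / x) ^ 2)) atTop (𝓝 1) := by
  simpa using (((tendsto_inv_atTop_zero (𝕜 := ℝ)).pow 2).const_sub 1).sqrt

theorem tendsto_one_div_mul_sqrt_one_add_atTop :
    Tendsto (fun x : ℝ => 1 / x * √(1 + x)) atTop (𝓝 0) := by
  have hinv : Tendsto (fun x : ℝ => √(x⁻¹ ^ 2 + x⁻¹)) atTop (𝓝 0) := by
    simpa using ((tendsto_inv_atTop_zero (𝕜 := ℝ)).pow 2 |>.add tendsto_inv_atTop_zero).sqrt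
  refine hinv.congr' ((eventually_gt_atTop 0).mono fun x hx => ?_)
  have hx_inv : 0 ≤ 1 / x := by positivity
  calc √(x⁻¹ ^ 2 + x⁻¹) = √((1 / x) ^ 2 * (1 + x)) := by congr 1; field_simp
    _ = 1 / x * √(1 + x) := by rw [Real.sqrt_mul (sq_nonneg _), Real.sqrt_sq hx_inv]

theorem tendsto_atTop_of_comp_atTop {ι α β : Type*} [LinearOrder α] [LocallyFiniteOrderBot α]
    [LinearOrder β] [Nonempty β] [NoMaxOrder β] {l : Filter ι} {m : ι → α} {f : α → β}
    (h : Tendsto (fun i => f (m i)) l atTop) : Tendsto m l atTop := by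
  refine tendsto_atTop.mpr fun b => ?_
  obtain ⟨C, hC⟩ := ((Finset.Iio b).image f).bddAbove
  filter_upwards [h.eventually_gt_atTop C] with i hi
  by_contra! hib
  exact hi.not_ge (hC (Finset.mem_image_of_mem f (Finset.mem_Iio.mpr hib)))

theorem statement5_general
    {H : Type*} [NormedAddCommGroup H] [InnerProductSpace ℂ H] (D : Submodule ℂ H)
    {φ : ℕ+ → H} (hφD : ∀ j, φ j ∈ D) {lam : ℕ+ → ℝ} (hlam : ∀ j, -1 ≤ lam j)
    (hφ : Orthonormal ℂ φ) {ι : Type*} {l : Filter ι} {m : ι → ℕ+}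
    (hdiv : Tendsto (fun i => lam (m i)) l atTop) {ε α : ι → ℝ}
    (hε : ∀ i, ε i = 1 / lam (m i)) (hα : ∀ i, α i = √(1 - ε i ^ 2))
    {L : ι → Submodule ℂ H} (hL : ∀ i, L i = trialSpace φ (α i) (ε i) (m i)) :
    (∀ i, (L i : Set H) ⊆ D) ∧
    (∀ u ∈ formDom φ lam, Tendsto (fun i => formDist φ lam u (L i)) l (𝓝 0)) := by
  obtain rfl := funext hε
  obtain rfl := funext hα
  obtain rfl := funext hL
  refine ⟨fun i => trialSpace_le hφD _ _ _, fun u hu =>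
    tendsto_formDist_trialSpace hlam hφ hu (tendsto_atTop_of_comp_atTop hdiv) ?_ ?_⟩
  · exact_mod_cast (Complex.continuous_ofReal.tendsto 1).comp
      (tendsto_sqrt_one_sub_one_div_sq_atTop.comp hdiv)
  · simpa only [Function.comp_def, norm_mul, Complex.norm_real, norm_zero,
      Real.norm_of_nonneg (Real.sqrt_nonneg _)] using
      (tendsto_one_div_mul_sqrt_one_add_atTop.comp hdiv).norm

/-- Example 3.3 of the paper.  Let `T` be a nonnegative self-adjoint
operator with an orthonormal basis of eigenvectors `(φ_j)_{j ≥ 1}`, `T φ_j = λ_j φ_j`,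
`λ_j ≥ 0` and `λ_{3n} → ∞`.  With `ε n = 1/λ_{3n}`, `α n = √(1 − ε n²)` and
`L n = span{α n φ₁ + ε n φ_{3n}, φ₂, …, φ_{3n−1}}`, each `L n` is contained in `Dom T`
and `(L n) ∈ Λ(𝔱)`: `dist_𝔱[u, L n] → 0` for every `u` in the form domain. -/
theorem statement5
    {H : Type*} [NormedAddCommGroup H] [InnerProductSpace ℂ H] [CompleteSpace H]
    (T : PMap H H) (hT : T.IsSelfAdjoint)
    (hnonneg : ∀ x ∈ T.dom, 0 ≤ (⟪T.toFun x, x⟫ : ℂ).re)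
    (φ : ℕ+ → H) (hφdom : ∀ j, φ j ∈ T.dom)
    (lam : ℕ+ → ℝ) (hlam0 : ∀ j, 0 ≤ lam j)
    (heig : ∀ j, T.toFun (φ j) = (lam j : ℂ) • φ j)
    (hON : Orthonormal ℂ φ)
    (hbasis : (Submodule.span ℂ (Set.range φ)).topologicalClosure = ⊤)
    (hdiv : Tendsto (fun n : ℕ+ => lam (3 * n)) atTop atTop)
    (ε α : ℕ+ → ℝ)
    (hε : ∀ n, ε n = 1 / lam (3 * n)) (hα : ∀ n, α n = Real.sqrt (1 - ε n ^ 2))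
    (L : ℕ+ → Submodule ℂ H)
    (hL : ∀ n, L n = Submodule.span ℂ
      ({(α n : ℂ) • φ 1 + (ε n : ℂ) • φ (3 * n)} ∪ (φ '' Set.Icc 2 (3 * n - 1)))) :
    (∀ n, (L n : Set H) ⊆ T.dom) ∧
    (∀ u ∈ formDom φ lam, Tendsto (fun n : ℕ+ => formDist φ lam u (L n)) atTop (𝓝 0)) :=
  statement5_general T.dom hφdom (fun j => by linarith [hlam0 j]) hON hdiv hε hα hL
end

section
/- Let M₀ = [[A,B],[B*,D]] be a top-dominant block operator matrix satisfying conditions (i)–(iii), with self-adjoint closure M, d = max Spec(D), and Schur complement S(μ). Let λ > d be real and x ∈ Dom(S(λ)). Then the vector y = (x, −(D−λ)^{-1}B*x) belongs to Dom(M), ‖y‖ ≥ ‖x‖, and (M−λ)y = (S(λ)x, 0). -/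
open Filter Topology
open scoped ComplexInnerProductSpace

/-- The Schur form `s(μ)[x,y] = 𝔞[x,y] − μ⟨x,y⟩ − ⟨(D−μ)⁻¹ B*x, B*y⟩`, where `fa` is the
closed form of `A`, `Bs = B*`, and `RD μ = (D−μ)⁻¹` is the resolvent of `D`. -/
noncomputable def schurForm {H1 H2 : Type*} [NormedAddCommGroup H1] [InnerProductSpace ℂ H1]
    [NormedAddCommGroup H2] [InnerProductSpace ℂ H2]
    (fa : H1 → H1 → ℂ) (Bs : PMap H1 H2) (RD : ℂ → (H2 →L[ℂ] H2)) (μ : ℂ) (x y : H1) : ℂ :=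
  fa x y - μ * ⟪x, y⟫ - ⟪RD μ (Bs.toFun x), Bs.toFun y⟫

/-! For the block operator with rows `(A, B)` and `(C, D)` and `G = cl((A - ν)⁻¹ B)`, regrouping the
first component gives `(M - z) (x, y) = ((A - ν) (x + G y) + (ν - z) x, C x + (D - z) y)`.
The choice `y = -(D - z)⁻¹ C x` annihilates the second component and turns the first one into the
Schur complement `S(z) x`. -/

section SchurComplement

variable {H1 H2 : Type*} [NormedAddCommGroup H1] [InnerProductSpace ℂ H1]
  [NormedAddCommGroup H2] [InnerProductSpace ℂ H2]

namespace PMap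

theorem map_neg (T : PMap H1 H2) {x : H1} (hx : x ∈ T.dom) : T.toFun (-x) = -T.toFun x := by
  simpa only [neg_one_smul] using T.map_smul' (-1) x hx

theorem map_neg_sub_smul_neg (T : PMap H1 H1) {x : H1} (hx : x ∈ T.dom) (z : ℂ) :
    T.toFun (-x) - z • -x = -(T.toFun x - z • x) := by
  rw [T.map_neg hx]
  module

end PMap

/-- `IsBlockOperator A C D G ν M` says that `M` is the operator given by the block matrix with rows
`(A, B)` and `(C, D)`. The corner `B` enters only through `G`, which stands for the closure of
`(A - ν)⁻¹ B`; the action of `M` is prescribed only on vectors whose first component lies in the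
domain of `C`, since `C.toFun` is meaningless elsewhere. -/
structure IsBlockOperator (A : PMap H1 H1) (C : PMap H1 H2) (D : PMap H2 H2) (G : H2 →ₗ[ℂ] H1)
    (ν : ℂ) (M : PMap (WithLp 2 (H1 × H2)) (WithLp 2 (H1 × H2))) : Prop where
  mem_dom_iff : ∀ x y, WithLp.toLp 2 (x, y) ∈ M.dom ↔ y ∈ D.dom ∧ x + G y ∈ A.dom
  apply_toLp : ∀ x y, WithLp.toLp 2 (x, y) ∈ M.dom → x ∈ C.dom →
    M.toFun (WithLp.toLp 2 (x, y)) =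
      WithLp.toLp 2 (A.toFun (x + G y) - ν • G y, C.toFun x + D.toFun y)

/-- `IsSchurComplement A C G R F ν z S` says that `S` is the Schur complement at `z` of the block
operator described by `A`, `C`, `G` and `ν` (see `IsBlockOperator`). Here `R` stands for
`(D - z)⁻¹` and `F` for the domain of the closed form of `A`. -/
structure IsSchurComplement (A : PMap H1 H1) (C : PMap H1 H2) (G : H2 →ₗ[ℂ] H1) (R : H2 → H2)
    (F : Submodule ℂ H1) (ν z : ℂ) (S : PMap H1 H1) : Prop where
  mem_dom_iff : ∀ x, x ∈ S.dom ↔ x ∈ F ∧ x - G (R (C.toFun x)) ∈ A.dom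
  apply_eq : ∀ x ∈ S.dom, S.toFun x =
    A.toFun (x - G (R (C.toFun x))) - ν • (x - G (R (C.toFun x))) + (ν - z) • x

/-- The lift `(x, -R (C x))` of a vector `x` of the Schur complement to the full space, where `R`
stands for `(D - z)⁻¹`. -/
def schurLift (C : PMap H1 H2) (R : H2 → H2) (x : H1) : WithLp 2 (H1 × H2) :=
  WithLp.toLp 2 (x, -R (C.toFun x))

theorem norm_le_norm_schurLift (C : PMap H1 H2) (R : H2 → H2) (x : H1) :
    ‖x‖ ≤ ‖schurLift C R x‖ :=
  WithLp.norm_fst_le H1 (schurLift C R x)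

variable {A : PMap H1 H1} {C : PMap H1 H2} {D : PMap H2 H2} {G : H2 →ₗ[ℂ] H1} {R : H2 → H2}
  {F : Submodule ℂ H1} {ν z : ℂ} {M : PMap (WithLp 2 (H1 × H2)) (WithLp 2 (H1 × H2))}
  {S : PMap H1 H1}

namespace IsBlockOperator

theorem apply_toLp_sub_smul (hM : IsBlockOperator A C D G ν M) (z : ℂ) {x : H1} {y : H2}
    (hxy : WithLp.toLp 2 (x, y) ∈ M.dom) (hx : x ∈ C.dom) :
    M.toFun (WithLp.toLp 2 (x, y)) - z • WithLp.toLp 2 (x, y) =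
      WithLp.toLp 2 (A.toFun (x + G y) - ν • (x + G y) + (ν - z) • x,
        C.toFun x + (D.toFun y - z • y)) := by
  rw [hM.apply_toLp x y hxy hx, ← WithLp.toLp_smul, ← WithLp.toLp_sub, Prod.smul_mk, Prod.mk_sub_mk]
  congr 2
  · module
  · rw [add_sub_assoc]

theorem schurLift_mem_dom (hM : IsBlockOperator A C D G ν M)
    (hS : IsSchurComplement A C G R F ν z S) (hR : ∀ w, R w ∈ D.dom) {x : H1} (hx : x ∈ S.dom) :
    schurLift C R x ∈ M.dom := by
  refine (hM.mem_dom_iff _ _).2 ⟨D.dom.neg_mem (hR _), ?_⟩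
  rw [map_neg, ← sub_eq_add_neg]
  exact ((hS.mem_dom_iff x).1 hx).2

theorem apply_schurLift_sub_smul (hM : IsBlockOperator A C D G ν M)
    (hS : IsSchurComplement A C G R F ν z S) (hFC : F ≤ C.dom)
    (hR : ∀ w, R w ∈ D.dom ∧ D.toFun (R w) - z • R w = w) {x : H1} (hx : x ∈ S.dom) :
    M.toFun (schurLift C R x) - z • schurLift C R x = WithLp.toLp 2 (S.toFun x, 0) := by
  have hxC : x ∈ C.dom := hFC ((hS.mem_dom_iff x).1 hx).1
  obtain ⟨hRdom, hRinv⟩ := hR (C.toFun x)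
  have snd_eq_zero : C.toFun x + (D.toFun (-R (C.toFun x)) - z • -R (C.toFun x)) = 0 := by
    rw [D.map_neg_sub_smul_neg hRdom, hRinv, add_neg_cancel]
  rw [schurLift, hM.apply_toLp_sub_smul z (hM.schurLift_mem_dom hS (fun w ↦ (hR w).1) hx) hxC,
    snd_eq_zero, hS.apply_eq x hx, map_neg, ← sub_eq_add_neg]

end IsBlockOperator

theorem statement8_general (hM : IsBlockOperator A C D G ν M)
    (hS : IsSchurComplement A C G R F ν z S) (hFC : F ≤ C.dom)
    (hR : ∀ w, R w ∈ D.dom ∧ D.toFun (R w) - z • R w = w) {x : H1} (hx : x ∈ S.dom) :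
    schurLift C R x ∈ M.dom ∧ ‖x‖ ≤ ‖schurLift C R x‖ ∧
      M.toFun (schurLift C R x) - z • schurLift C R x = WithLp.toLp 2 (S.toFun x, 0) :=
  ⟨hM.schurLift_mem_dom hS (fun w ↦ (hR w).1) hx, norm_le_norm_schurLift C R x,
    hM.apply_schurLift_sub_smul hS hFC hR hx⟩

end SchurComplement

/-- from the proof of Lemma 4.1.  For a top-dominant block operator
matrix `M₀ = [[A,B],[B*,D]]` with self-adjoint closure `M`, `d = max Spec D` and Schur
complement `S(μ)`: if `lam > d` and `x ∈ Dom (S lam)`, then the vector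
`y = (x, −(D − lam)⁻¹ B* x)` belongs to `Dom M`, `‖y‖ ≥ ‖x‖`, and
`(M − lam) y = (S(lam) x, 0)`. -/
theorem statement8
    {H1 : Type*} [NormedAddCommGroup H1] [InnerProductSpace ℂ H1] [CompleteSpace H1]
    {H2 : Type*} [NormedAddCommGroup H2] [InnerProductSpace ℂ H2] [CompleteSpace H2]
    -- (i) `A` and `D` are self-adjoint on `H1` and `H2` respectively
    (A : PMap H1 H1) (hA : A.IsSelfAdjoint)
    (D : PMap H2 H2) (hD : D.IsSelfAdjoint)
    -- (ii) `A` bounded below, `D` bounded above with `d = max Spec D`,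
    -- `B` closed and densely defined from `H2` to `H1`
    (hAbelow : ∃ c : ℝ, ∀ x ∈ A.dom, c * ‖x‖ ^ 2 ≤ (⟪A.toFun x, x⟫ : ℂ).re)
    (d : ℝ) (hd : IsGreatest D.specR d)
    (hDabove : ∀ y ∈ D.dom, (⟪D.toFun y, y⟫ : ℂ).re ≤ d * ‖y‖ ^ 2)
    (B : PMap H2 H1)
    (hBclosed : IsClosed {p : H2 × H1 | p.1 ∈ B.dom ∧ p.2 = B.toFun p.1})
    (hBdense : Dense (B.dom : Set H2))
    -- `Bs` is the adjoint `B*` of `B`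
    (Bs : PMap H1 H2)
    (hBs : (∀ y : H1, y ∈ Bs.dom ↔ ∃ z : H2, ∀ x ∈ B.dom, ⟪B.toFun x, y⟫ = ⟪x, z⟫) ∧
      ∀ x ∈ B.dom, ∀ y ∈ Bs.dom, ⟪B.toFun x, y⟫ = ⟪x, Bs.toFun y⟫)
    -- `Fa = Dom(|A|^{1/2}) = Dom(𝔞)`, the domain of the closed form `fa = 𝔞` of `A`
    (Fa : Submodule ℂ H1) (fa : H1 → H1 → ℂ)
    (hAdomFa : (A.dom : Set H1) ⊆ Fa)
    (hfaHerm : ∀ x ∈ Fa, ∀ y ∈ Fa, fa x y = starRingEnd ℂ (fa y x))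
    (hfaA : ∀ x ∈ A.dom, ∀ y ∈ Fa, fa x y = ⟪A.toFun x, y⟫)
    -- (iii) `Dom(|A|^{1/2}) ⊆ Dom(B*)`, `Dom(B) ⊆ Dom(D)`, and `Dom(B)` is a core for `D`
    (hFaBs : (Fa : Set H1) ⊆ (Bs.dom : Set H1))
    (hBD : B.dom ≤ D.dom)
    (hBcore : ∀ y ∈ D.dom, ∀ δ : ℝ, 0 < δ →
      ∃ z ∈ B.dom, ‖z - y‖ < δ ∧ ‖D.toFun z - D.toFun y‖ < δ)
    -- `ν < min Spec A`, with `RA = (A − ν)⁻¹` and `G = cl((A − ν)⁻¹ B)` bounded,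
    -- and `RD z = (D − z)⁻¹` for `Re z > d`
    (ν : ℝ) (hν : ∃ c : ℝ, ν < c ∧ ∀ x ∈ A.dom, c * ‖x‖ ^ 2 ≤ (⟪A.toFun x, x⟫ : ℂ).re)
    (RA : H1 →L[ℂ] H1)
    (hRA : (∀ x ∈ A.dom, RA (A.toFun x - (ν : ℂ) • x) = x) ∧
      ∀ y : H1, RA y ∈ A.dom ∧ A.toFun (RA y) - (ν : ℂ) • RA y = y)
    (G : H2 →L[ℂ] H1) (hG : ∀ y ∈ B.dom, G y = RA (B.toFun y))
    (RD : ℂ → (H2 →L[ℂ] H2))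
    (hRD : ∀ z : ℂ, d < z.re →
      (∀ y ∈ D.dom, RD z (D.toFun y - z • y) = y) ∧
      ∀ w : H2, RD z w ∈ D.dom ∧ D.toFun (RD z w) - z • RD z w = w)
    -- `M` is the self-adjoint closure of `M₀`
    (M : PMap (WithLp 2 (H1 × H2)) (WithLp 2 (H1 × H2))) (hM : M.IsSelfAdjoint)
    (hMdom : ∀ (x : H1) (y : H2),
      (WithLp.equiv 2 (H1 × H2)).symm (x, y) ∈ M.dom ↔ y ∈ D.dom ∧ x + G y ∈ A.dom)
    (hMact : ∀ (x : H1) (y : H2),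
      (WithLp.equiv 2 (H1 × H2)).symm (x, y) ∈ M.dom → x ∈ Bs.dom →
      M.toFun ((WithLp.equiv 2 (H1 × H2)).symm (x, y)) =
        (WithLp.equiv 2 (H1 × H2)).symm
          (A.toFun (x + G y) - (ν : ℂ) • G y, Bs.toFun x + D.toFun y))
    -- the Schur complement `S μ` for real `μ > d`
    (S : ℝ → PMap H1 H1)
    (hSsa : ∀ μ : ℝ, d < μ → (S μ).IsSelfAdjoint)
    (hSdom : ∀ μ : ℝ, d < μ → ∀ x : H1,
      x ∈ (S μ).dom ↔ x ∈ Fa ∧ x - G (RD (μ : ℂ) (Bs.toFun x)) ∈ A.dom)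
    (hSact : ∀ μ : ℝ, d < μ → ∀ x ∈ (S μ).dom,
      (S μ).toFun x = A.toFun (x - G (RD (μ : ℂ) (Bs.toFun x)))
        - (ν : ℂ) • (x - G (RD (μ : ℂ) (Bs.toFun x))) + ((ν : ℂ) - (μ : ℂ)) • x)
    (lam : ℝ) (hlam : d < lam)
    (x : H1) (hx : x ∈ (S lam).dom) :
    (WithLp.equiv 2 (H1 × H2)).symm (x, -(RD (lam : ℂ) (Bs.toFun x))) ∈ M.dom ∧
    ‖x‖ ≤ ‖(WithLp.equiv 2 (H1 × H2)).symm (x, -(RD (lam : ℂ) (Bs.toFun x)))‖ ∧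
    M.toFun ((WithLp.equiv 2 (H1 × H2)).symm (x, -(RD (lam : ℂ) (Bs.toFun x))))
        - (lam : ℂ) • (WithLp.equiv 2 (H1 × H2)).symm (x, -(RD (lam : ℂ) (Bs.toFun x)))
      = (WithLp.equiv 2 (H1 × H2)).symm ((S lam).toFun x, 0) :=
  statement8_general (G := G.toLinearMap) ⟨hMdom, hMact⟩ ⟨hSdom lam hlam, hSact lam hlam⟩ hFaBs
    (hRD lam hlam).2 hx
end
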